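/- Let F : ℝ^m × ℝ^p → ℝ be a smooth (infinitely differentiable) function and let (u*, d*) ∈ ℝ^m × ℝ^p. Suppose that (i) the derivative at u* of the partial map u ↦ F(u, d*) vanishes and its second derivative at u* is a positive definite quadratic form on ℝ^m, and (ii) the derivative at d* of the partial map d ↦ F(u*, d) vanishes and its second derivative at d* is a negative definite quadratic form on ℝ^p. Then there exist open sets U ⊆ ℝ^m and D ⊆ ℝ^p with u* ∈ U and d* ∈ D such that (u*, d*) is a saddle point of F restricted to U × D. -/

import Mathlib

/-!
The two saddle inequalities involve the two partial maps separately, so both follow from the second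
derivative test. There the derivative of `f` at `x`, applied to `x - a`, is `D²f(a)(x - a, x - a)`
up to an error `o(‖x - a‖²)`. Coercivity of `D²f(a)`, which in finite dimension is compactness of
the unit sphere, absorbs this error, so `f` increases along every short segment issuing from `a`.
-/

open Set Topology

variable {E G : Type*} [NormedAddCommGroup E] [NormedSpace ℝ E] [NormedAddCommGroup G]
  [NormedSpace ℝ G]

section Coercive

variable {B : E →L[ℝ] E →L[ℝ] ℝ}

theorem isCoercive_of_forall_apply_self_pos [FiniteDimensional ℝ E]
    (hB : ∀ v, v ≠ 0 → 0 < B v v) : IsCoercive B := by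
  rcases subsingleton_or_nontrivial E with _ | _
  · exact ⟨1, one_pos, fun v => by simp [Subsingleton.elim v 0]⟩
  obtain ⟨w, hw, hmin⟩ := (isCompact_sphere (0 : E) 1).exists_isMinOn
    (NormedSpace.sphere_nonempty.2 zero_le_one) (f := fun v => B v v) (by fun_prop)
  refine ⟨B w w, hB w (ne_zero_of_mem_unit_sphere ⟨w, hw⟩), fun v => ?_⟩
  rcases eq_or_ne v 0 with rfl | hv
  · simp
  have hnorm : ‖v‖ ≠ 0 := norm_ne_zero_iff.2 hv
  have hle : B w w ≤ B (‖v‖⁻¹ • v) (‖v‖⁻¹ • v) :=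
    hmin (mem_sphere_zero_iff_norm.2 (by simp [norm_smul, hnorm]))
  calc B w w * ‖v‖ * ‖v‖ ≤ B (‖v‖⁻¹ • v) (‖v‖⁻¹ • v) * ‖v‖ * ‖v‖ := by gcongr
    _ = B v v := by
      simp only [map_smul, smul_apply, smul_eq_mul]
      field_simp

theorem ne_zero_of_isCoercive [Nontrivial E] (hB : IsCoercive B) : B ≠ 0 := by
  rintro rfl
  obtain ⟨C, hC, hle⟩ := hB
  obtain ⟨v, hv⟩ := exists_ne (0 : E)
  have hpos : 0 < C * ‖v‖ * ‖v‖ := by positivity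
  exact hpos.not_ge (hle v)

theorem eventually_apply_sub_pos_of_isCoercive {φ : E → E →L[ℝ] ℝ} {a : E}
    (hφ : HasFDerivAt φ B a) (hφa : φ a = 0) (hB : IsCoercive B) :
    ∀ᶠ x in 𝓝[≠] a, 0 < φ x (x - a) := by
  obtain ⟨C, hC, hcoer⟩ := hB
  filter_upwards [(hφ.isLittleO.bound (half_pos hC)).filter_mono nhdsWithin_le_nhds,
    self_mem_nhdsWithin] with x hx hxa
  rw [hφa, sub_zero] at hx
  have herror : |φ x (x - a) - B (x - a) (x - a)| ≤ C / 2 * ‖x - a‖ * ‖x - a‖ :=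
    (φ x - B (x - a)).le_of_opNorm_le hx (x - a)
  have hmain : C * ‖x - a‖ * ‖x - a‖ ≤ B (x - a) (x - a) := hcoer (x - a)
  have hnorm : 0 < C * ‖x - a‖ * ‖x - a‖ := by
    have := norm_pos_iff.2 (sub_ne_zero.2 hxa)
    positivity
  linarith [neg_le_of_abs_le herror]

end Coercive

section DerivativeTests

variable {f : E → ℝ} {a : E}

theorem isMinOn_of_hasFDerivAt_apply_sub_nonneg {f' : E → E →L[ℝ] ℝ} {s : Set E}
    (hs : StarConvex ℝ a s) (hfa : ContinuousAt f a)
    (hf : ∀ x ∈ s, x ≠ a → HasFDerivAt f (f' x) x)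
    (hf' : ∀ x ∈ s, x ≠ a → 0 ≤ f' x (x - a)) : IsMinOn f s a := by
  refine isMinOn_iff.2 fun y hy => ?_
  rcases eq_or_ne y a with rfl | hya
  · rfl
  let γ : ℝ → E := AffineMap.lineMap a y
  have hγs : ∀ t ∈ Icc (0 : ℝ) 1, γ t ∈ s := fun t ht =>
    hs.segment_subset hy (lineMap_mem_segment ℝ a y ht)
  have hγa : ∀ t, 0 < t → γ t ≠ a := fun t ht h =>
    (AffineMap.lineMap_eq_left_iff.1 h).elim hya.symm ht.ne'
  have hderiv : ∀ t ∈ Ioc (0 : ℝ) 1, HasDerivAt (f ∘ γ) (f' (γ t) (y - a)) t := fun t ht =>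
    (hf _ (hγs t (Ioc_subset_Icc_self ht)) (hγa t ht.1)).comp_hasDerivAt t
      AffineMap.hasDerivAt_lineMap
  have hcont : ContinuousOn (f ∘ γ) (Icc 0 1) := fun t ht => by
    rcases ht.1.eq_or_lt with rfl | h0
    · exact (ContinuousAt.comp (by simpa [γ] using hfa)
        AffineMap.lineMap_continuous.continuousAt).continuousWithinAt
    · exact (hderiv t ⟨h0, ht.2⟩).continuousAt.continuousWithinAt
  obtain ⟨t, ht, hslope⟩ := exists_hasDerivAt_eq_slope (f ∘ γ) _ one_pos hcont
    fun t ht => hderiv t (Ioo_subset_Ioc_self ht)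
  have hnonneg : 0 ≤ t * f' (γ t) (y - a) := by
    simpa [γ, AffineMap.lineMap_apply] using hf' _ (hγs t (Ioo_subset_Icc_self ht)) (hγa t ht.1)
  have hincr : f' (γ t) (y - a) = f y - f a := by simpa [γ] using hslope
  exact sub_nonneg.1 (hincr ▸ nonneg_of_mul_nonneg_right hnonneg ht.1)

theorem isLocalMin_of_fderiv_apply_sub_pos (hfa : ContinuousAt f a)
    (hpos : ∀ᶠ x in 𝓝[≠] a, 0 < fderiv ℝ f x (x - a)) : IsLocalMin f a := by
  obtain ⟨r, hr, hball⟩ := Metric.eventually_nhds_iff_ball.1 (eventually_nhdsWithin_iff.1 hpos)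
  -- `fderiv` is `0` at points of non-differentiability, so positivity yields differentiability.
  have hdiff : ∀ x ∈ Metric.ball a r, x ≠ a → DifferentiableAt ℝ f x := fun x hx hxa => by
    by_contra h
    simpa [fderiv_zero_of_not_differentiableAt h] using hball x hx hxa
  exact (isMinOn_of_hasFDerivAt_apply_sub_nonneg
    ((convex_ball a r).starConvex (Metric.mem_ball_self hr)) hfa
    (fun x hx hxa => (hdiff x hx hxa).hasFDerivAt)
    fun x hx hxa => (hball x hx hxa).le).isLocalMin (Metric.ball_mem_nhds a hr)

theorem isLocalMin_of_isCoercive_fderiv_fderiv (hfa : ContinuousAt f a) (hcrit : fderiv ℝ f a = 0)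
    (hcoer : IsCoercive (fderiv ℝ (fderiv ℝ f) a)) : IsLocalMin f a := by
  rcases subsingleton_or_nontrivial E with _ | _
  · exact .of_forall fun x => (congrArg f (Subsingleton.elim a x)).le
  have hdiff : DifferentiableAt ℝ (fderiv ℝ f) a :=
    not_imp_comm.1 fderiv_zero_of_not_differentiableAt (ne_zero_of_isCoercive hcoer)
  exact isLocalMin_of_fderiv_apply_sub_pos hfa
    (eventually_apply_sub_pos_of_isCoercive hdiff.hasFDerivAt hcrit hcoer)

theorem isLocalMax_of_isCoercive_neg_fderiv_fderiv (hfa : ContinuousAt f a)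
    (hcrit : fderiv ℝ f a = 0) (hcoer : IsCoercive (-fderiv ℝ (fderiv ℝ f) a)) :
    IsLocalMax f a := by
  have hfderiv : fderiv ℝ (-f) = -fderiv ℝ f := funext fun _ => fderiv_neg
  have hmin : IsLocalMin (-f) a := isLocalMin_of_isCoercive_fderiv_fderiv hfa.neg
    (by simp [hfderiv, hcrit]) (by rwa [hfderiv, fderiv_neg])
  simpa using hmin.neg

end DerivativeTests

theorem stmt_4_general {F : E × G → ℝ} {ustar : E} {dstar : G}
    (hcu : ContinuousAt (fun u => F (u, dstar)) ustar)
    (hgu : fderiv ℝ (fun u => F (u, dstar)) ustar = 0)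
    (hcoer_u : IsCoercive (fderiv ℝ (fderiv ℝ fun u => F (u, dstar)) ustar))
    (hcd : ContinuousAt (fun d => F (ustar, d)) dstar)
    (hgd : fderiv ℝ (fun d => F (ustar, d)) dstar = 0)
    (hcoer_d : IsCoercive (-fderiv ℝ (fderiv ℝ fun d => F (ustar, d)) dstar)) :
    ∃ U : Set E, ∃ D : Set G, IsOpen U ∧ IsOpen D ∧ ustar ∈ U ∧ dstar ∈ D ∧
      ∀ u ∈ U, ∀ d ∈ D, F (ustar, d) ≤ F (ustar, dstar) ∧ F (ustar, dstar) ≤ F (u, dstar) := by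
  obtain ⟨U, hmin, hUo, huU⟩ :=
    eventually_nhds_iff.1 (isLocalMin_of_isCoercive_fderiv_fderiv hcu hgu hcoer_u)
  obtain ⟨D, hmax, hDo, hdD⟩ :=
    eventually_nhds_iff.1 (isLocalMax_of_isCoercive_neg_fderiv_fderiv hcd hgd hcoer_d)
  exact ⟨U, D, hUo, hDo, huU, hdD, fun u hu d hd => ⟨hmax d hd, hmin u hu⟩⟩

/-- Sufficient second-order condition for a (local) saddle point. -/
theorem stmt_4 {m p : ℕ}
    (F : (EuclideanSpace ℝ (Fin m)) × (EuclideanSpace ℝ (Fin p)) → ℝ)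
    (hF : ContDiff ℝ (⊤ : ℕ∞) F)
    (ustar : EuclideanSpace ℝ (Fin m)) (dstar : EuclideanSpace ℝ (Fin p))
    (hgu : fderiv ℝ (fun u => F (u, dstar)) ustar = 0)
    (hposdef : ∀ v : EuclideanSpace ℝ (Fin m), v ≠ 0 →
      0 < iteratedFDeriv ℝ 2 (fun u => F (u, dstar)) ustar ![v, v])
    (hgd : fderiv ℝ (fun d => F (ustar, d)) dstar = 0)
    (hnegdef : ∀ w : EuclideanSpace ℝ (Fin p), w ≠ 0 →
      iteratedFDeriv ℝ 2 (fun d => F (ustar, d)) dstar ![w, w] < 0) :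
    ∃ U : Set (EuclideanSpace ℝ (Fin m)), ∃ D : Set (EuclideanSpace ℝ (Fin p)),
      IsOpen U ∧ IsOpen D ∧ ustar ∈ U ∧ dstar ∈ D ∧
      ∀ u ∈ U, ∀ d ∈ D, F (ustar, d) ≤ F (ustar, dstar) ∧ F (ustar, dstar) ≤ F (u, dstar) := by
  have hF_cont : Continuous F := hF.continuous
  refine stmt_4_general (by fun_prop) hgu ?_ (by fun_prop) hgd ?_ <;>
    refine isCoercive_of_forall_apply_self_pos fun v hv => ?_
  · simpa [iteratedFDeriv_two_apply] using hposdef v hv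
  · simpa [iteratedFDeriv_two_apply] using hnegdef v hv
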